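/- Let r ≥ 3 and let D be a digraph on n vertices that contains no transitive tournament on r vertices. If every vertex has out-degree strictly greater than ((3r−7)/(3r−4))·n, then the underlying graph of D is (r−1)-colorable. -/

import Mathlib

/-!
By the undirected Andrásfai–Erdős–Sós theorem it is enough that a clique on `r` vertices of the
underlying graph forces a transitive tournament on `r` vertices. Straighten the clique one vertex at
a time, keeping a clique `S` all of whose vertices dominate a transitive tournament `l`, with
`#S + |l| = r`. Give weight `1` to the vertices of `S` and `2` to those of `l`. If `#S ≥ 3`, the
total weight is at most `2r - 3`, and as every vertex misses fewer than
`3n / (3r - 4) < 2n / (2r - 3)` vertices, some vertex `y` is missed by weight at most `1`: all of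
`l` and all of `S` but at most one vertex dominate `y`. Trading the exceptional vertex for `y`
appended to `l` makes `S` smaller. Once `#S ≤ 2`, the vertices of `S` can be ordered and put in
front of `l`.
-/

open Finset

section DoubleCounting

variable {α β : Type*} [Fintype β] {R : α → β → Prop} [∀ x, DecidablePred (R x)]

theorem two_mul_card_le_of_forall_weight {S T : Finset α} {m : ℕ}
    (hS : ∀ x ∈ S, #{y | ¬ R x y} ≤ m) (hT : ∀ x ∈ T, #{y | ¬ R x y} ≤ m)
    (hweight : ∀ y, 2 ≤ #{x ∈ S | ¬ R x y} + 2 * #{x ∈ T | ¬ R x y}) :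
    2 * Fintype.card β ≤ (#S + 2 * #T) * m := by
  have double_count (U : Finset α) : ∑ y, #{x ∈ U | ¬ R x y} = ∑ x ∈ U, #{y | ¬ R x y} :=
    (sum_card_bipartiteAbove_eq_sum_card_bipartiteBelow fun x y => ¬ R x y).symm
  calc 2 * Fintype.card β = ∑ _y : β, 2 := by simp [mul_comm]
    _ ≤ ∑ y, (#{x ∈ S | ¬ R x y} + 2 * #{x ∈ T | ¬ R x y}) := sum_le_sum fun y _ => hweight y
    _ = ∑ x ∈ S, #{y | ¬ R x y} + 2 * ∑ x ∈ T, #{y | ¬ R x y} := by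
      rw [sum_add_distrib, ← mul_sum, double_count, double_count]
    _ ≤ #S * m + 2 * (#T * m) := by
      gcongr
      exacts [sum_le_card_nsmul S _ m hS, sum_le_card_nsmul T _ m hT]
    _ = (#S + 2 * #T) * m := by ring

theorem exists_forall_and_card_le_card_filter_add_one {S T : Finset α} {m : ℕ}
    (hS : ∀ x ∈ S, #{y | ¬ R x y} ≤ m) (hT : ∀ x ∈ T, #{y | ¬ R x y} ≤ m)
    (hm : (#S + 2 * #T) * m < 2 * Fintype.card β) :
    ∃ y, (∀ x ∈ T, R x y) ∧ #S ≤ #{x ∈ S | R x y} + 1 := by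
  by_contra! hcon
  refine hm.not_ge (two_mul_card_le_of_forall_weight hS hT fun y => ?_)
  by_cases hy : ∀ x ∈ T, R x y
  · have hsplit := card_filter_add_card_filter_not (s := S) (R · y)
    have hfew := hcon y hy
    omega
  · have hpos : 0 < #{x ∈ T | ¬ R x y} := by
      simpa only [card_pos, filter_nonempty_iff, not_forall, exists_prop] using hy
    omega

end DoubleCounting

section Digraph

variable {V : Type*} {A : V → V → Prop}

theorem injective_get_of_pairwise (hirr : ∀ v, ¬ A v v) {l : List V} (hl : l.Pairwise A) :
    Function.Injective l.get :=
  List.nodup_iff_injective_get.mp <| hl.imp fun huv => by rintro rfl; exact hirr _ huv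

/-- A clique `S` of the underlying graph of the digraph `A` sitting on top of a transitive
tournament `l`: every vertex of `S` dominates every vertex of `l`. The tournament is the list of its
vertices in transitive order. -/
structure IsCliqueOverTournament (A : V → V → Prop) (S : Finset V) (l : List V) : Prop where
  isClique : (SimpleGraph.fromRel A).IsClique S
  pairwise : l.Pairwise A
  dominates : ∀ x ∈ S, ∀ y ∈ l, A x y

theorem exists_pairwise_of_isClique_of_card_le_two {S : Finset V}
    (hS : (SimpleGraph.fromRel A).IsClique S) (hcard : #S ≤ 2) :
    ∃ l : List V, l.length = #S ∧ l.Pairwise A ∧ ∀ x ∈ l, x ∈ S := by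
  classical
  interval_cases hc : #S
  · exact ⟨[], by simp⟩
  · obtain ⟨a, rfl⟩ := card_eq_one.mp hc
    exact ⟨[a], by simp⟩
  · obtain ⟨a, b, hab, rfl⟩ := card_eq_two.mp hc
    obtain hA | hA := (hS (by simp) (by simp) hab).2
    · exact ⟨[a, b], by simp [hA]⟩
    · exact ⟨[b, a], by simp [hA]⟩

namespace IsCliqueOverTournament

variable {S : Finset V} {l : List V}

theorem exists_pairwise_of_card_le_two (h : IsCliqueOverTournament A S l) (hcard : #S ≤ 2) :
    ∃ l' : List V, l'.length = #S + l.length ∧ l'.Pairwise A := by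
  obtain ⟨t, htlen, ht, htS⟩ := exists_pairwise_of_isClique_of_card_le_two h.isClique hcard
  exact ⟨t ++ l, by rw [List.length_append, htlen],
    List.pairwise_append.mpr ⟨ht, h.pairwise, fun x hx => h.dominates x (htS x hx)⟩⟩

theorem concat (h : IsCliqueOverTournament A S l) {S' : Finset V} (hsub : S' ⊆ S) {y : V}
    (hS' : ∀ x ∈ S', A x y) (hl : ∀ x ∈ l, A x y) : IsCliqueOverTournament A S' (l ++ [y]) where
  isClique := h.isClique.subset (coe_subset.mpr hsub)
  pairwise := List.pairwise_append.mpr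
    ⟨h.pairwise, List.pairwise_singleton A y, by simpa only [List.forall_mem_singleton] using hl⟩
  dominates x hx := List.forall_mem_append.mpr
    ⟨h.dominates x (hsub hx), List.forall_mem_singleton.mpr (hS' x hx)⟩

variable [Fintype V] [DecidableRel A] {m : ℕ}

theorem exists_concat (h : IsCliqueOverTournament A S l) {s : ℕ} (hs : #S = s + 1)
    (hmiss : ∀ v, #{u | ¬ A v u} ≤ m) (hm : (#S + 2 * l.length) * m < 2 * Fintype.card V) :
    ∃ (S' : Finset V) (y : V), #S' = s ∧ IsCliqueOverTournament A S' (l ++ [y]) := by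
  classical
  have hm' : (#S + 2 * #l.toFinset) * m < 2 * Fintype.card V :=
    hm.trans_le' (by gcongr; exact l.toFinset_card_le)
  obtain ⟨y, hly, hSy⟩ := exists_forall_and_card_le_card_filter_add_one
    (fun x _ => hmiss x) (fun x _ => hmiss x) hm'
  obtain ⟨S', hS', hcard⟩ := exists_subset_card_eq (show s ≤ #{x ∈ S | A x y} by omega)
  exact ⟨S', y, hcard, h.concat (hS'.trans (filter_subset _ S))
    (fun x hx => (mem_filter.mp (hS' hx)).2) fun x hx => hly x (List.mem_toFinset.mpr hx)⟩

theorem exists_pairwise (h : IsCliqueOverTournament A S l) (hmiss : ∀ v, #{u | ¬ A v u} ≤ m)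
    (hm : (2 * (#S + l.length) - 3) * m < 2 * Fintype.card V) :
    ∃ l' : List V, l'.length = #S + l.length ∧ l'.Pairwise A := by
  induction hs : #S generalizing S l with
  | zero => exact hs ▸ h.exists_pairwise_of_card_le_two (by omega)
  | succ s ih =>
    obtain hsmall | hlarge := le_or_gt #S 2
    · exact hs ▸ h.exists_pairwise_of_card_le_two hsmall
    · have hweight : (#S + 2 * l.length) * m < 2 * Fintype.card V :=
        hm.trans_le' (Nat.mul_le_mul_right m (by omega))
      obtain ⟨S', y, hS', h'⟩ := h.exists_concat hs hmiss hweight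
      have hlen : #S' + (l ++ [y]).length = #S + l.length := by
        rw [List.length_append, List.length_singleton]; omega
      obtain ⟨l', hl'len, hl'⟩ := ih h' (hlen ▸ hm) hS'
      exact ⟨l', by omega, hl'⟩

end IsCliqueOverTournament

variable [Fintype V] [DecidableRel A]

theorem exists_pairwise_of_isNClique {S : Finset V} {r m : ℕ}
    (hS : (SimpleGraph.fromRel A).IsNClique r S) (hmiss : ∀ v, #{u | ¬ A v u} ≤ m)
    (hm : (2 * r - 3) * m < 2 * Fintype.card V) :
    ∃ l : List V, l.length = r ∧ l.Pairwise A := by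
  have hover : IsCliqueOverTournament A S [] := ⟨hS.isClique, List.Pairwise.nil, by simp⟩
  obtain rfl := hS.card_eq
  exact hover.exists_pairwise hmiss hm

theorem cliqueFree_fromRel_of_forall_not_pairwise [Nonempty V] {r : ℕ} (hr : 3 ≤ r)
    (hfree : ∀ l : List V, l.length = r → ¬ l.Pairwise A)
    (hdeg : ∀ v, (3 * r - 7) * Fintype.card V < (3 * r - 4) * #{u | A v u}) :
    (SimpleGraph.fromRel A).CliqueFree r := by
  intro S hS
  obtain ⟨w, hw⟩ := Finite.exists_max fun v => #{u | ¬ A v u}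
  have hmiss : (3 * r - 4) * #{u | ¬ A w u} < 3 * Fintype.card V := by
    have hsplit : #{u | A w u} + #{u | ¬ A w u} = Fintype.card V :=
      card_filter_add_card_filter_not (s := univ) (A w)
    have hsum : (3 * r - 4) * #{u | A w u} + (3 * r - 4) * #{u | ¬ A w u} =
        (3 * r - 7) * Fintype.card V + 3 * Fintype.card V := by
      rw [← mul_add, ← add_mul, hsplit]; congr 1; omega
    have hw_deg := hdeg w
    omega
  have hm : (2 * r - 3) * #{u | ¬ A w u} < 2 * Fintype.card V := by
    have hcoeff : 3 * (2 * r - 3) ≤ 2 * (3 * r - 4) := by omega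
    have hmul := Nat.mul_le_mul_right #{u | ¬ A w u} hcoeff
    rw [mul_assoc, mul_assoc] at hmul
    omega
  obtain ⟨l, hlen, hl⟩ := exists_pairwise_of_isNClique hS hw hm
  exact hfree l hlen hl

theorem card_filter_le_degree_fromRel [DecidableEq V] (hirr : ∀ v, ¬ A v v) (v : V) :
    #{u | A v u} ≤ (SimpleGraph.fromRel A).degree v := by
  refine card_le_card fun u hu => ?_
  have hvu : A v u := (mem_filter.mp hu).2
  rw [SimpleGraph.mem_neighborFinset]
  exact ⟨fun huv => hirr u (huv ▸ hvu), Or.inl hvu⟩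

theorem colorable_fromRel_of_cliqueFree (hirr : ∀ v, ¬ A v v) {r : ℕ} (hr : 2 ≤ r) [Nonempty V]
    (hfree : (SimpleGraph.fromRel A).CliqueFree r)
    (hdeg : ∀ v, (3 * r - 7) * Fintype.card V < (3 * r - 4) * #{u | A v u}) :
    (SimpleGraph.fromRel A).Colorable (r - 1) := by
  classical
  obtain ⟨k, rfl⟩ : ∃ k, r = k + 1 := ⟨r - 1, by omega⟩
  refine SimpleGraph.colorable_of_cliqueFree_lt_minDegree hfree ?_
  obtain ⟨v, hv⟩ := (SimpleGraph.fromRel A).exists_minimal_degree_vertex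
  rw [hv, Nat.div_lt_iff_lt_mul (by omega), mul_comm (SimpleGraph.degree _ v)]
  exact (hdeg v).trans_le (Nat.mul_le_mul_left _ (card_filter_le_degree_fromRel hirr v))

end Digraph

theorem three_mul_sub_seven_mul_lt {r n d : ℕ} (hr : 3 ≤ r)
    (h : (3 * (r : ℝ) - 7) / (3 * (r : ℝ) - 4) * n < d) : (3 * r - 7) * n < (3 * r - 4) * d := by
  have hr' : (3 : ℝ) ≤ r := by exact_mod_cast hr
  rw [div_mul_eq_mul_div, div_lt_iff₀' (by linarith)] at h
  have h7 : 7 ≤ 3 * r := by omega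
  have h4 : 4 ≤ 3 * r := by omega
  exact_mod_cast h

/-- Directed Andrásfai–Erdős–Sós theorem: if `D` on `n` vertices contains no
transitive tournament on `r ≥ 3` vertices and every out-degree exceeds
`((3r−7)/(3r−4))·n`, then the underlying graph of `D` is `(r−1)`-colorable. -/
theorem stmt_8 {V : Type*} [Fintype V] (n r : ℕ) (hn : Fintype.card V = n) (hr : 3 ≤ r)
    (A : V → V → Prop) (hirr : ∀ v, ¬ A v v)
    (hfree : ¬ ∃ f : Fin r → V, Function.Injective f ∧ ∀ i j : Fin r, i < j → A (f i) (f j))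
    (hdeg : ∀ v : V, (3 * (r : ℝ) - 7) / (3 * (r : ℝ) - 4) * n < Nat.card {u : V // A v u}) :
    ∃ col : V → Fin (r - 1), ∀ u v : V, A u v → col u ≠ col v := by
  classical
  obtain hV | hV := isEmpty_or_nonempty V
  · exact ⟨hV.elim, hV.elim⟩
  have hdeg' (v : V) : (3 * r - 7) * Fintype.card V < (3 * r - 4) * #{u | A v u} := by
    rw [hn, ← Fintype.card_subtype, ← Nat.card_eq_fintype_card]
    exact three_mul_sub_seven_mul_lt hr (hdeg v)
  have hcliqueFree : (SimpleGraph.fromRel A).CliqueFree r := by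
    refine cliqueFree_fromRel_of_forall_not_pairwise hr (fun l hlen hl => ?_) hdeg'
    subst hlen
    exact hfree ⟨l.get, injective_get_of_pairwise hirr hl, List.pairwise_iff_get.mp hl⟩
  obtain ⟨c⟩ := colorable_fromRel_of_cliqueFree hirr (by omega) hcliqueFree hdeg'
  exact ⟨c, fun u v huv => c.valid ⟨fun huv' => hirr v (huv' ▸ huv), Or.inl huv⟩⟩
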